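/- In the finite discriminative clustering setup, for every nonempty uniformly bounded family F of functions X → ℝ, the one-vs-all IPM GEMINI is at most the one-vs-one IPM GEMINI: ∑_{k=1}^K π(k)·D_F(q_k, p) ≤ ∑_{a=1}^K ∑_{b=1}^K π(a)·π(b)·D_F(q_a, q_b). -/

import Mathlib

open Finset

/-!
The data distribution is the mixture `p = ∑ b, π b • q b`, and `D_F(r, ·)` is convex, being a
supremum of affine functions. Jensen's inequality therefore gives
`D_F(q a, p) ≤ ∑ b, π b * D_F(q a, q b)`; averaging over `a` with weights `π a` concludes.
-/

section Supremum

variable {ι E : Type*} {t : Set ι}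

theorem biSup_eq_iSup_indicator (t : Set ι) (f : ι → ℝ) :
    ⨆ i ∈ t, f i = ⨆ i, t.indicator f i := by
  refine iSup_congr fun i => ?_
  by_cases hi : i ∈ t <;> simp [hi]

theorem bddAbove_range_indicator_iff {f : ι → ℝ} :
    BddAbove (Set.range (t.indicator f)) ↔ BddAbove (f '' t) := by
  refine ⟨fun h => h.mono ?_, fun h => (h.insert 0).mono ?_⟩
  · rintro _ ⟨i, hi, rfl⟩
    exact ⟨i, Set.indicator_of_mem hi f⟩
  · rintro _ ⟨i, rfl⟩
    by_cases hi : i ∈ t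
    · exact Or.inr ⟨i, hi, (Set.indicator_of_mem hi f).symm⟩
    · exact Or.inl (Set.indicator_of_notMem hi f)

variable [AddCommGroup E] [Module ℝ E] {s : Set E} {g : ι → E → ℝ}

theorem convexOn_ciSup [Nonempty ι] (hg : ∀ i, ConvexOn ℝ s (g i)) :
    ConvexOn ℝ {x ∈ s | BddAbove (Set.range fun i => g i x)} fun x => ⨆ i, g i x := by
  have le_combination {x y : E} (hx : x ∈ s ∧ BddAbove (Set.range fun i => g i x))
      (hy : y ∈ s ∧ BddAbove (Set.range fun i => g i y)) {a b : ℝ} (ha : 0 ≤ a) (hb : 0 ≤ b)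
      (hab : a + b = 1) (i : ι) :
      g i (a • x + b • y) ≤ a * (⨆ i, g i x) + b * ⨆ i, g i y :=
    calc
      g i (a • x + b • y) ≤ a * g i x + b * g i y := (hg i).2 hx.1 hy.1 ha hb hab
      _ ≤ a * (⨆ i, g i x) + b * ⨆ i, g i y := by
        gcongr
        exacts [le_ciSup hx.2 i, le_ciSup hy.2 i]
  refine ⟨fun x hx y hy a b ha hb hab => ⟨?_, ?_⟩, fun x hx y hy a b ha hb hab => ?_⟩
  · exact (hg (Classical.arbitrary ι)).1 hx.1 hy.1 ha hb hab
  · exact ⟨_, Set.forall_mem_range.2 (le_combination hx hy ha hb hab)⟩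
  · exact ciSup_le (le_combination hx hy ha hb hab)

theorem convexOn_cbiSup [Nonempty ι] (hs : Convex ℝ s) (hg : ∀ i ∈ t, ConvexOn ℝ s (g i)) :
    ConvexOn ℝ {x ∈ s | BddAbove ((fun i => g i x) '' t)} fun x => ⨆ i ∈ t, g i x := by
  -- For `i ∉ t` the inner supremum is `sSup ∅ = 0`, a constant and hence again convex in `x`.
  have convexOn_indicator (i : ι) : ConvexOn ℝ s fun x => t.indicator (fun j => g j x) i := by
    by_cases hi : i ∈ t
    · simpa only [Set.indicator_of_mem hi] using hg i hi
    · simpa only [Set.indicator_of_notMem hi] using convexOn_const 0 hs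
  simpa only [biSup_eq_iSup_indicator, ← bddAbove_range_indicator_iff]
    using convexOn_ciSup convexOn_indicator

end Supremum

theorem sum_mul_le_sum_sum_mul_of_convexOn {ι E : Type*} [Fintype ι] [AddCommGroup E]
    [Module ℝ E] {D : E → E → ℝ} {w : ι → ℝ} {q : ι → E} {s : ι → Set E}
    (hw : ∀ a, 0 ≤ w a) (hw1 : ∑ a, w a = 1) (hD : ∀ a, ConvexOn ℝ (s a) (D (q a)))
    (hq : ∀ a b, q b ∈ s a) :
    ∑ a, w a * D (q a) (∑ b, w b • q b) ≤ ∑ a, ∑ b, w a * w b * D (q a) (q b) := by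
  simp only [mul_assoc, ← mul_sum]
  gcongr with a
  · exact hw a
  · exact (hD a).map_sum_le (fun b _ => hw b) hw1 fun b _ => hq a b

section IntegralProbabilityMetric

variable {X : Type*} [Fintype X]

/-- The difference `E_r[f] - E_s[f]` of the means of `f` under the mass functions `r` and `s`. -/
def meanGap (r s f : X → ℝ) : ℝ :=
  ∑ x, r x * f x - ∑ x, s x * f x

/-- The integral probability metric `D_F(r, s)`. For `f ∉ F` the inner supremum is `sSup ∅ = 0`,
so unless `F` is everything this is the positive part of the supremum over `F`. -/
noncomputable def ipm (F : Set (X → ℝ)) (r s : X → ℝ) : ℝ :=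
  ⨆ f ∈ F, meanGap r s f

theorem convexOn_meanGap (r f : X → ℝ) : ConvexOn ℝ Set.univ fun s => meanGap r s f :=
  (convexOn_const _ convex_univ).sub ((Fintype.linearCombination ℝ f).concaveOn convex_univ)

theorem convexOn_ipm (F : Set (X → ℝ)) (r : X → ℝ) :
    ConvexOn ℝ {s | BddAbove (meanGap r s '' F)} (ipm F r) := by
  simpa only [Set.sep_univ] using!
    convexOn_cbiSup (t := F) convex_univ fun f _ => convexOn_meanGap r f

theorem bddAbove_meanGap_image {F : Set (X → ℝ)} {M : ℝ} (hF : ∀ f ∈ F, ∀ x, |f x| ≤ M)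
    (r s : X → ℝ) : BddAbove (meanGap r s '' F) := by
  refine ⟨∑ x, |r x - s x| * M, Set.forall_mem_image.2 fun f hf => ?_⟩
  calc
    meanGap r s f = ∑ x, (r x - s x) * f x := by
      simp only [meanGap, sub_mul, sum_sub_distrib]
    _ ≤ ∑ x, |r x - s x| * |f x| := sum_le_sum fun x _ => by
      rw [← abs_mul]
      exact le_abs_self _
    _ ≤ ∑ x, |r x - s x| * M := by
      gcongr with x
      exact hF f hf x

end IntegralProbabilityMetric

section Clustering

variable {X ι : Type*} [Fintype X] {p : X → ℝ} {c : X → ι → ℝ}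

/-- The proportion `π(k)` of cluster `k` under data distribution `p` and clustering
posterior `c`. -/
def clusterProportion (p : X → ℝ) (c : X → ι → ℝ) (k : ι) : ℝ :=
  ∑ x, p x * c x k

/-- The conditional distribution `q_k` of the data given cluster `k`, obtained from the posterior
`c` by Bayesian inversion; it is identically `0` if the cluster has proportion `0`. -/
noncomputable def clusterConditional (p : X → ℝ) (c : X → ι → ℝ) (k : ι) (x : X) : ℝ :=
  p x * c x k / clusterProportion p c k

variable [Fintype ι]

theorem sum_clusterProportion (hc : ∀ x, ∑ k, c x k = 1) :
    ∑ k, clusterProportion p c k = ∑ x, p x := by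
  simp only [clusterProportion]
  rw [sum_comm]
  simp only [← mul_sum, hc, mul_one]

theorem sum_clusterProportion_smul_clusterConditional (hc : ∀ x, ∑ k, c x k = 1)
    (hπ : ∀ k, clusterProportion p c k ≠ 0) :
    ∑ k, clusterProportion p c k • clusterConditional p c k = p := by
  funext x
  simp only [Finset.sum_apply, Pi.smul_apply, smul_eq_mul, clusterConditional,
    mul_div_cancel₀ _ (hπ _), ← mul_sum, hc, mul_one]

theorem gemini_ova_le_ovo_ipm_general (hp : ∑ x, p x = 1) (hc : ∀ x, ∑ k, c x k = 1)
    (hπ : ∀ k, 0 < clusterProportion p c k) {F : Set (X → ℝ)}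
    (hF : ∀ a b, BddAbove (meanGap (clusterConditional p c a) (clusterConditional p c b) '' F)) :
    ∑ k, clusterProportion p c k * ipm F (clusterConditional p c k) p ≤
      ∑ a, ∑ b, clusterProportion p c a * clusterProportion p c b *
        ipm F (clusterConditional p c a) (clusterConditional p c b) := by
  have jensen := sum_mul_le_sum_sum_mul_of_convexOn (fun k => (hπ k).le)
    ((sum_clusterProportion hc).trans hp)
    (fun a => convexOn_ipm F (clusterConditional p c a)) hF
  rwa [sum_clusterProportion_smul_clusterConditional hc fun k => (hπ k).ne'] at jensen

end Clustering

/-- In the finite discriminative clustering setup, for every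
nonempty uniformly bounded family `F` of functions `X → ℝ`, the one-vs-all IPM
GEMINI is at most the one-vs-one IPM GEMINI. -/
theorem gemini_ova_le_ovo_ipm
    {X : Type*} [Fintype X] [Nonempty X]
    (p : X → ℝ) (hp : ∀ x, 0 < p x) (hp1 : ∑ x, p x = 1)
    (K : ℕ) (hK : 0 < K)
    (c : X → Fin K → ℝ) (hc : ∀ x k, 0 ≤ c x k) (hc1 : ∀ x, ∑ k, c x k = 1)
    (pr : Fin K → ℝ) (hpr : ∀ k, pr k = ∑ x, p x * c x k) (hprpos : ∀ k, 0 < pr k)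
    (q : Fin K → X → ℝ) (hq : ∀ k x, q k x = p x * c x k / pr k)
    (F : Set (X → ℝ)) (hFne : F.Nonempty)
    (hFbd : ∃ M, ∀ f ∈ F, ∀ x, |f x| ≤ M)
    (D : (X → ℝ) → (X → ℝ) → ℝ)
    (hD : ∀ r s, D r s = ⨆ f ∈ F, (∑ x, r x * f x - ∑ x, s x * f x)) :
    ∑ k, pr k * D (q k) p ≤ ∑ a, ∑ b, pr a * pr b * D (q a) (q b) := by
  obtain ⟨M, hM⟩ := hFbd
  obtain rfl : pr = clusterProportion p c := funext hpr
  obtain rfl : q = clusterConditional p c := funext₂ hq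
  obtain rfl : D = ipm F := funext₂ hD
  exact gemini_ova_le_ovo_ipm_general hp1 hc1 hprpos fun _ _ => bddAbove_meanGap_image hM _ _
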